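/- Let k be a differential field of characteristic zero whose field of constants C is algebraically closed, and let k ⊆ k̃ ⊆ K be differential fields such that k̃ is an algebraic field extension of k and the field of constants of K equals C. Then for every x ∈ K, x satisfies some monic linear homogeneous differential equation with coefficients in k̃ if and only if x satisfies some monic linear homogeneous differential equation with coefficients in k (that is, T(K|k̃) = T(K|k)). -/

import Mathlib

universe u

/-- A bundled differential field of characteristic zero: a field together with a derivation,
given as a raw function satisfying additivity and the Leibniz rule. -/
structure DFld : Type (u + 1) where
  carrier : Type u
  [fieldInst : Field carrier]
  [charZeroInst : CharZero carrier]
  deriv : carrier → carrier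
  deriv_add : ∀ a b, deriv (a + b) = deriv a + deriv b
  deriv_mul : ∀ a b, deriv (a * b) = deriv a * b + a * deriv b

attribute [instance] DFld.fieldInst DFld.charZeroInst

/-- The result of applying the monic linear differential operator
`∂^n + a_{n-1} ∂^{n-1} + ⋯ + a_1 ∂ + a_0` (with coefficients `a`) to `y`,
where the derivation is given by `D`. -/
def LApply {E : Type u} [Field E] (D : E → E) (n : ℕ) (a : Fin n → E) (y : E) : E :=
  D^[n] y + ∑ i : Fin n, a i * D^[(i : ℕ)] y

/-- `diffGen D k S` is the smallest differential subfield (w.r.t. the derivation `D`)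
containing the subfield `k` and the set `S`; i.e. the differential field `k⟨S⟩`. -/
def diffGen {E : Type u} [Field E] (D : E → E) (k : Subfield E) (S : Set E) : Subfield E :=
  sInf {F : Subfield E | k ≤ F ∧ S ⊆ ↑F ∧ ∀ x ∈ F, D x ∈ F}

/-- The subfield of constants of a differential subfield `k`: `{x ∈ k | D x = 0}`. -/
def constantsOf {E : Type u} [Field E] (D : Derivation ℤ E E) (k : Subfield E) : Subfield E where
  carrier := {x | x ∈ k ∧ D x = 0}
  zero_mem' := ⟨k.zero_mem, map_zero D⟩
  one_mem' := ⟨k.one_mem, D.map_one_eq_zero⟩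
  add_mem' := by
    rintro a b ⟨hak, ha0⟩ ⟨hbk, hb0⟩
    exact ⟨k.add_mem hak hbk, by rw [map_add, ha0, hb0, add_zero]⟩
  neg_mem' := by
    rintro a ⟨hak, ha0⟩
    exact ⟨k.neg_mem hak, by rw [map_neg, ha0, neg_zero]⟩
  mul_mem' := by
    rintro a b ⟨hak, ha0⟩ ⟨hbk, hb0⟩
    exact ⟨k.mul_mem hak hbk, by
      rw [Derivation.leibniz, ha0, hb0, smul_zero, smul_zero, add_zero]⟩
  inv_mem' := by
    rintro x ⟨hxk, hx0⟩
    refine ⟨k.inv_mem hxk, ?_⟩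
    by_cases h : x = 0
    · simp [h]
    · have h1 : D (x * x⁻¹) = 0 := by rw [mul_inv_cancel₀ h, D.map_one_eq_zero]
      rw [Derivation.leibniz, hx0, smul_zero, add_zero, smul_eq_mul] at h1
      exact (mul_eq_zero.mp h1).resolve_left h

/-- `F` is a Picard–Vessiot extension of `k` (inside a common differential field) for the
monic linear differential operator of order `n` with (lower-order) coefficients `a`:
both are differential subfields, the constants of `F` equal the constants of `k`,
the coefficients lie in `k`, and `F` is differentially generated over `k` by an
`n`-dimensional vector space (over the constants) of solutions. -/
def IsPVWith {E : Type u} [Field E] (D : E → E) (k F : Subfield E) (n : ℕ)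
    (a : Fin n → E) : Prop :=
  k ≤ F ∧ (∀ x ∈ k, D x ∈ k) ∧ (∀ x ∈ F, D x ∈ F) ∧
  (∀ x ∈ F, D x = 0 → x ∈ k) ∧
  (∀ i, a i ∈ k) ∧
  ∃ y : Fin n → E,
    (∀ i, y i ∈ F) ∧
    (∀ i, LApply D n a (y i) = 0) ∧
    (∀ c : Fin n → E, (∀ i, c i ∈ k ∧ D (c i) = 0) → (∑ i, c i * y i) = 0 → ∀ i, c i = 0) ∧
    diffGen D k (Set.range y) = F

/-- `F` is a Picard–Vessiot extension of `k` for some monic linear differential operator. -/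
def IsPV {E : Type u} [Field E] (D : E → E) (k F : Subfield E) : Prop :=
  ∃ (n : ℕ) (a : Fin n → E), IsPVWith D k F n a

/-- Relative version: the differential subfield `F` is a Picard–Vessiot extension
of the differential subfield `kb ≤ F`. -/
def IsPVRel {E : Type u} [Field E] (D : E → E) (kb F : Subfield E)
    (hF : ∀ x ∈ F, D x ∈ F) : Prop :=
  IsPV (fun x : ↥F => (⟨D ↑x, hF ↑x x.2⟩ : ↥F)) (Subfield.comap F.subtype kb) ⊤

/-- The ambient differential field (with derivation `D`) is a strongly normal extension of
its differential subfield `k`: it is finitely generated as a field extension of `k`, has no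
new constants, and every differential embedding over `k` into a differential field extension
`M` lands in the compositum of the image of the base copy with the constants of `M`. -/
def IsSN {E : Type u} [Field E] (D : E → E) (k : Subfield E) : Prop :=
  (∀ x ∈ k, D x ∈ k) ∧
  (∃ s : Finset E, Subfield.closure (↑k ∪ ↑s) = (⊤ : Subfield E)) ∧
  (∀ x : E, D x = 0 → x ∈ k) ∧
  ∀ (M : DFld.{u}) (ι σ : E →+* M.carrier),
    (∀ x, ι (D x) = M.deriv (ι x)) →
    (∀ x, σ (D x) = M.deriv (σ x)) →
    (∀ x ∈ k, σ x = ι x) →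
    ∀ e : E, σ e ∈ Subfield.closure (Set.range ι ∪ {m : M.carrier | M.deriv m = 0})

/-- Relative version: the differential subfield `F` is a strongly normal extension of the
differential subfield `kb ≤ F`. -/
def IsSNRel {E : Type u} [Field E] (D : E → E) (kb F : Subfield E)
    (hF : ∀ x ∈ F, D x ∈ F) : Prop :=
  IsSN (fun x : ↥F => (⟨D ↑x, hF ↑x x.2⟩ : ↥F)) (Subfield.comap F.subtype kb)

/-- `K` is a finite field extension of the subfield `M`. -/
def FinExt {E : Type u} [Field E] (M K : Subfield E) : Prop :=
  ∃ h : M ≤ K,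
    letI : Algebra ↥M ↥K := (Subfield.inclusion h).toAlgebra
    Module.Finite ↥M ↥K

/-- The transcendence degree of the subfield `K` over the subfield `k`, as the supremum of the
cardinalities of subsets of `K` that are algebraically independent over `k`. -/
noncomputable def trdegOf {E : Type u} [Field E] (k K : Subfield E) : Cardinal.{u} :=
  ⨆ s : {s : Set E // s ⊆ (K : Set E) ∧ AlgebraicIndependent ↥k (fun x : ↥s => (x : E))},
    Cardinal.mk ↥(s.1)

/-- `K` and `M` are free over `k`: every finite subset of `K` that is algebraically
independent over `k` remains algebraically independent over `M`. -/
def FreeOver {E : Type u} [Field E] (k K M : Subfield E) : Prop :=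
  ∀ s : Finset E, (↑s : Set E) ⊆ (K : Set E) →
    AlgebraicIndependent ↥k (fun x : ↥(↑s : Set E) => (x : E)) →
    AlgebraicIndependent ↥M (fun x : ↥(↑s : Set E) => (x : E))

/-- `K` is a `k`-irreducible differential field: it is a finitely generated differential field
extension of `k` of transcendence degree at least 1, and every intermediate differential field
`k ⊂ M ⊆ K` has transcendence degree `0` or `trdeg(K|k)` over `k`. -/
def IsIrred {E : Type u} [Field E] (D : E → E) (k K : Subfield E) : Prop :=
  (∃ s : Finset E, diffGen D k ↑s = K) ∧
  1 ≤ trdegOf k K ∧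
  ∀ M : Subfield E, (∀ x ∈ M, D x ∈ M) → k < M → M ≤ K →
    trdegOf k M = 0 ∨ trdegOf k M = trdegOf k K

/-- `Kf` is a `d`-solvable extension of `k`: there is a tower of differential fields starting
at (a copy of) `k`, each step being a finite algebraic extension or a Picard–Vessiot extension
for an operator of order at most `d`, whose top contains (the copy of) `Kf`. -/
def IsDSolvable {E : Type u} [Field E] (D : E → E) (k Kf : Subfield E) (d : ℕ) : Prop :=
  ∃ (Ω : DFld.{u}) (j : E →+* Ω.carrier),
    (∀ x, j (D x) = Ω.deriv (j x)) ∧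
    ∃ (r : ℕ) (T : Fin (r + 1) → Subfield Ω.carrier),
      T 0 = Subfield.map j k ∧
      Subfield.map j Kf ≤ T (Fin.last r) ∧
      (∀ i, ∀ x ∈ T i, Ω.deriv x ∈ T i) ∧
      ∀ i : Fin r,
        FinExt (T i.castSucc) (T i.succ) ∨
        ∃ n ≤ d, ∃ a : Fin n → Ω.carrier, IsPVWith Ω.deriv (T i.castSucc) (T i.succ) n a

/-- `Kn` is generated over `kb`, as a differential field with the same constants, by one
solution `z` of an inhomogeneous equation `L(y) = b` (with `L` monic over `kb` of order
`n ≤ d` and `b ∈ kb`) together with an `n`-dimensional space (over the constants) of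
solutions of `L(y) = 0`. -/
def IsPVInhomLe {E : Type u} [Field E] (D : E → E) (kb Kn : Subfield E) (d : ℕ) : Prop :=
  kb ≤ Kn ∧ (∀ x ∈ kb, D x ∈ kb) ∧ (∀ x ∈ Kn, D x ∈ Kn) ∧
  (∀ x ∈ Kn, D x = 0 → x ∈ kb) ∧
  ∃ n, n ≤ d ∧ ∃ (a : Fin n → E) (b z : E) (y : Fin n → E),
    (∀ i, a i ∈ kb) ∧ b ∈ kb ∧ z ∈ Kn ∧ (∀ i, y i ∈ Kn) ∧
    LApply D n a z = b ∧
    (∀ i, LApply D n a (y i) = 0) ∧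
    (∀ c : Fin n → E, (∀ i, c i ∈ kb ∧ D (c i) = 0) → (∑ i, c i * y i) = 0 → ∀ i, c i = 0) ∧
    diffGen D kb (insert z (Set.range y)) = Kn

/-- `Kf` is a `d⁺`-solvable extension of `k`. -/
def IsDPlusSolvable {E : Type u} [Field E] (D : E → E) (k Kf : Subfield E) (d : ℕ) : Prop :=
  ∃ (Ω : DFld.{u}) (j : E →+* Ω.carrier),
    (∀ x, j (D x) = Ω.deriv (j x)) ∧
    ∃ (r : ℕ) (T : Fin (r + 1) → Subfield Ω.carrier),
      T 0 = Subfield.map j k ∧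
      Subfield.map j Kf ≤ T (Fin.last r) ∧
      (∀ i, ∀ x ∈ T i, Ω.deriv x ∈ T i) ∧
      ∀ i : Fin r,
        FinExt (T i.castSucc) (T i.succ) ∨ IsPVInhomLe Ω.deriv (T i.castSucc) (T i.succ) d

/-- `TSet D kb K` is the set of elements of `K` annihilated by some monic linear differential
operator with coefficients in `kb`. -/
def TSet {E : Type u} [Field E] (D : E → E) (kb K : Subfield E) : Set E :=
  {x | x ∈ K ∧ ∃ (n : ℕ) (a : Fin n → E), (∀ i, a i ∈ kb) ∧ LApply D n a x = 0}

theorem aux_poly {K : Type u} [Field K] (D : Derivation ℤ K K) (k : Subfield K)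
    (hk : ∀ x ∈ k, D x ∈ k) (a : K) (p : Polynomial k) :
    ∃ q : Polynomial k, D (Polynomial.aeval a p) =
      Polynomial.aeval a q + Polynomial.aeval a (Polynomial.derivative p) * D a := by
  induction p using Polynomial.induction_on' with
  | add p q hp hq =>
    obtain ⟨r, hr⟩ := hp
    obtain ⟨s, hs⟩ := hq
    refine ⟨r + s, ?_⟩
    simp only [map_add, hr, hs]
    ring
  | monomial n c =>
    refine ⟨Polynomial.monomial n ⟨D c, hk c c.2⟩, ?_⟩
    simp only [Polynomial.aeval_monomial, Polynomial.derivative_monomial, Derivation.leibniz,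
      Derivation.leibniz_pow, smul_eq_mul, nsmul_eq_mul, map_mul, map_natCast]
    change (c : K) * _ + _ * D c = D c * _ + (c : K) * _ * _ * _
    ring

theorem aux_mem {K : Type u} [Field K] [CharZero K] (D : Derivation ℤ K K) (k : Subfield K)
    (hk : ∀ x ∈ k, D x ∈ k) (F : IntermediateField k K) (a : K) (ha : a ∈ F)
    (h : IsAlgebraic k a) : D a ∈ F := by
  obtain ⟨q, hq⟩ := aux_poly D k hk a (minpoly k a)
  have hsep := (minpoly.irreducible h.isIntegral).separable.aeval_derivative_ne_zero
    (minpoly.aeval k a)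
  rw [minpoly.aeval, map_zero] at hq
  have e : D a = - (Polynomial.aeval a q) / Polynomial.aeval a (minpoly k a).derivative := by
    rw [eq_div_iff hsep]
    linear_combination -hq
  have hF : ∀ r : Polynomial k, Polynomial.aeval a r ∈ F := by
    intro r
    have := Polynomial.aeval_algHom_apply F.val (⟨a, ha⟩ : F) r
    change Polynomial.aeval a r = _ at this
    rw [this]
    exact (Polynomial.aeval (⟨a, ha⟩ : F) r).2
  rw [e]
  exact F.div_mem (F.neg_mem (hF _)) (hF _)

theorem aux_fin {k W : Type*} [Field k] [AddCommGroup W] [Module k W] [FiniteDimensional k W]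
    (v : ℕ → W) : ∃ m : ℕ, v m ∈ Submodule.span k (Set.range fun i : Fin m => v i) := by
  by_contra! H
  have : ∀ m : ℕ, LinearIndependent k (fun i : Fin m => v i) := by
    intro m
    induction m with
    | zero => exact linearIndependent_empty_type
    | succ m ih =>
      rw [linearIndependent_finSucc']
      exact ⟨ih, H m⟩
  have := (this (Module.finrank k W + 1)).fintype_card_le_finrank
  simp at this

theorem aux_main {K : Type u} [Field K] [CharZero K] (D : Derivation ℤ K K) (k : Subfield K)
    (hk : ∀ x ∈ k, D x ∈ k) (n : ℕ) (a : Fin n → K) (ha : ∀ i, IsAlgebraic k (a i))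
    (x : K) (hx : LApply D n a x = 0) :
    ∃ (m : ℕ) (b : Fin m → K), (∀ i, b i ∈ k) ∧ LApply D m b x = 0 := by
  let F : IntermediateField k K := IntermediateField.adjoin k (Set.range a)
  have hFfin : FiniteDimensional k F := by
    apply IntermediateField.finiteDimensional_adjoin
    rintro _ ⟨i, rfl⟩
    exact (ha i).isIntegral
  have hFD : ∀ f ∈ F, D f ∈ F := fun f hf =>
    aux_mem D k hk F f hf (F.isAlgebraic_iff.1 (Algebra.IsAlgebraic.isAlgebraic (⟨f, hf⟩ : F)))
  let W : Submodule F K := Submodule.span F (Set.range fun i : Fin n => D^[(i : ℕ)] x)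
  have hgen : ∀ i : ℕ, i < n → D^[i] x ∈ W := fun i hi =>
    Submodule.subset_span ⟨⟨i, hi⟩, rfl⟩
  have hn : D^[n] x ∈ W := by
    have e : D^[n] x = - ∑ i : Fin n, a i * D^[(i : ℕ)] x := eq_neg_of_add_eq_zero_left hx
    rw [e]
    refine W.neg_mem (W.sum_mem fun i _ => ?_)
    exact W.smul_mem (⟨a i, IntermediateField.subset_adjoin k _ ⟨i, rfl⟩⟩ : F) (hgen i i.2)
  have hWD : ∀ w ∈ W, D w ∈ W := by
    intro w hw
    induction hw using Submodule.span_induction with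
    | mem y hy =>
      obtain ⟨i, rfl⟩ := hy
      change D (D^[(i : ℕ)] x) ∈ W
      rw [← Function.iterate_succ_apply' (⇑D)]
      rcases Nat.lt_or_eq_of_le (Nat.succ_le_of_lt i.2) with h | h
      · exact hgen _ h
      · rw [h]; exact hn
    | zero => simp
    | add y z _ _ hy hz => rw [map_add]; exact W.add_mem hy hz
    | smul f y hy' hy =>
      have : D (f • y) = f • D y + (⟨D f, hFD f f.2⟩ : F) • y := by
        change D ((f : K) * y) = (f : K) * D y + D f * y
        rw [Derivation.leibniz, smul_eq_mul, smul_eq_mul, mul_comm y]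
      rw [this]
      exact W.add_mem (W.smul_mem _ hy) (W.smul_mem _ hy')
  have hx0 : x ∈ W := by
    rcases Nat.eq_zero_or_pos n with h | h
    · have := hn
      rw [h] at this
      exact this
    · exact hgen 0 h
  have hall : ∀ i, D^[i] x ∈ W := by
    intro i
    induction i with
    | zero => exact hx0
    | succ i ih => rw [Function.iterate_succ_apply']; exact hWD _ ih
  have : FiniteDimensional F W := FiniteDimensional.span_of_finite F (Set.finite_range _)
  have : FiniteDimensional k W := FiniteDimensional.trans k F W
  obtain ⟨m, hm⟩ := aux_fin (k := k) (fun i => (⟨D^[i] x, hall i⟩ : W))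
  rw [Submodule.mem_span_range_iff_exists_fun] at hm
  obtain ⟨c, hc⟩ := hm
  refine ⟨m, fun i => -(c i : K), fun i => k.neg_mem (c i).2, ?_⟩
  have hc' := congrArg (fun w : W => (w : K)) hc
  simp only [Submodule.coe_sum] at hc'
  unfold LApply
  rw [← hc', ← Finset.sum_add_distrib]
  refine Finset.sum_eq_zero fun i _ => ?_
  change (c i : K) * D^[(i : ℕ)] x + -(c i : K) * D^[(i : ℕ)] x = 0
  ring

/-- If `k ⊆ k̃ ⊆ K` with `k̃` algebraic over `k` and the constants of `K`
equal to the (algebraically closed) constants `C` of `k`, then `T(K|k̃) = T(K|k)`. -/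
theorem stmt6 {K : Type u} [Field K] [CharZero K] (D : Derivation ℤ K K)
    (k kt : Subfield K)
    (hk : ∀ x ∈ k, D x ∈ k) (hkt : ∀ x ∈ kt, D x ∈ kt)
    (hC : IsAlgClosed ↥(constantsOf D k))
    (h1 : k ≤ kt)
    (halg : ∀ x ∈ kt, IsAlgebraic ↥k x)
    (hconst : ∀ x : K, D x = 0 → x ∈ k) :
    TSet (⇑D) kt ⊤ = TSet (⇑D) k ⊤ := by
  ext x
  constructor
  · rintro ⟨hx, n, a, ha, h⟩
    exact ⟨hx, aux_main D k hk n a (fun i => halg _ (ha i)) x h⟩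
  · rintro ⟨hx, n, a, ha, h⟩
    exact ⟨hx, n, a, fun i => h1 (ha i), h⟩
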